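/- Let α, β, d, t, p, q ∈ ℝ with p ≥ 0. If L_q(S_p(R_t(0,0,α))) = (d, 0, β) (an RSL Dubins path: first a right arc of length t, then a straight segment of length p, then a left arc of length q), then p = sqrt(−2 + d² + 2·cos(α − β) − 2d·(sin α + sin β)). -/

import Mathlib

open Real

/-- Left-turn operator: arc of length `v` along the unit left-turning circle. -/
noncomputable def Lop (v : ℝ) : ℝ × ℝ × ℝ → ℝ × ℝ × ℝ :=
  fun c => (c.1 + Real.sin (c.2.2 + v) - Real.sin c.2.2,
            c.2.1 - Real.cos (c.2.2 + v) + Real.cos c.2.2,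
            c.2.2 + v)

/-- Right-turn operator: arc of length `v` along the unit right-turning circle. -/
noncomputable def Rop (v : ℝ) : ℝ × ℝ × ℝ → ℝ × ℝ × ℝ :=
  fun c => (c.1 - Real.sin (c.2.2 - v) + Real.sin c.2.2,
            c.2.1 + Real.cos (c.2.2 - v) - Real.cos c.2.2,
            c.2.2 - v)

/-- Straight-motion operator: straight segment of length `v`. -/
noncomputable def Sop (v : ℝ) : ℝ × ℝ × ℝ → ℝ × ℝ × ℝ :=
  fun c => (c.1 + v * Real.cos c.2.2, c.2.1 + v * Real.sin c.2.2, c.2.2)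

/-!
A turn keeps the centre of its turning circle fixed, so along an RSL path the initial right centre
and the final left centre are those at the two ends of the straight segment. That segment is an
inner common tangent of the two unit circles: the centres differ by `p` along it and by `2` across
it, so their squared distance is `p ^ 2 + 4`. Expressing the same distance through the end
configurations determines `p`.
-/

/-- The centre of the unit left-turning circle through a configuration. Plane points are encoded as
complex numbers so that `dist` is Euclidean, unlike on `ℝ × ℝ`. -/
noncomputable def leftCenter (c : ℝ × ℝ × ℝ) : ℂ :=
  ⟨c.1 - Real.sin c.2.2, c.2.1 + Real.cos c.2.2⟩

/-- The centre of the unit right-turning circle through a configuration, as a complex number. -/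
noncomputable def rightCenter (c : ℝ × ℝ × ℝ) : ℂ :=
  ⟨c.1 + Real.sin c.2.2, c.2.1 - Real.cos c.2.2⟩

theorem leftCenter_Lop (v : ℝ) (c : ℝ × ℝ × ℝ) : leftCenter (Lop v c) = leftCenter c := by
  apply Complex.ext <;> simp only [leftCenter, Lop] <;> ring

theorem rightCenter_Rop (v : ℝ) (c : ℝ × ℝ × ℝ) : rightCenter (Rop v c) = rightCenter c := by
  apply Complex.ext <;> simp only [rightCenter, Rop] <;> ring

theorem dist_rightCenter_leftCenter_sq (x₀ y₀ α x₁ y₁ β : ℝ) :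
    dist (rightCenter (x₀, y₀, α)) (leftCenter (x₁, y₁, β)) ^ 2 =
      (x₁ - x₀ - (Real.sin α + Real.sin β)) ^ 2 +
        (y₁ - y₀ + (Real.cos α + Real.cos β)) ^ 2 := by
  rw [rightCenter, leftCenter, Complex.dist_mk, Real.sq_sqrt (by positivity)]
  ring

theorem dist_rightCenter_leftCenter_Sop_sq (p : ℝ) (c : ℝ × ℝ × ℝ) :
    dist (rightCenter c) (leftCenter (Sop p c)) ^ 2 = p ^ 2 + 4 := by
  obtain ⟨x, y, φ⟩ := c
  rw [Sop, dist_rightCenter_leftCenter_sq]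
  linear_combination (p ^ 2 + 4) * Real.sin_sq_add_cos_sq φ

theorem dist_rightCenter_leftCenter_rsl_sq (t p q : ℝ) (c : ℝ × ℝ × ℝ) :
    dist (rightCenter c) (leftCenter (Lop q (Sop p (Rop t c)))) ^ 2 = p ^ 2 + 4 := by
  rw [leftCenter_Lop, ← rightCenter_Rop t c, dist_rightCenter_leftCenter_Sop_sq]

theorem rsl_straight_length_general {x₀ y₀ α x₁ y₁ β t p q : ℝ}
    (h : Lop q (Sop p (Rop t (x₀, y₀, α))) = (x₁, y₁, β)) :
    p ^ 2 = -2 + (x₁ - x₀) ^ 2 + (y₁ - y₀) ^ 2 + 2 * Real.cos (α - β) -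
      2 * (x₁ - x₀) * (Real.sin α + Real.sin β) +
        2 * (y₁ - y₀) * (Real.cos α + Real.cos β) := by
  have center_dist := dist_rightCenter_leftCenter_rsl_sq t p q (x₀, y₀, α)
  rw [h, dist_rightCenter_leftCenter_sq] at center_dist
  rw [Real.cos_sub]
  linear_combination -center_dist + Real.sin_sq_add_cos_sq α + Real.sin_sq_add_cos_sq β

theorem rsl_straight_length (α β d t p q : ℝ) (hp : 0 ≤ p)
    (h : Lop q (Sop p (Rop t (0, 0, α))) = (d, 0, β)) :
    p = Real.sqrt (-2 + d ^ 2 + 2 * Real.cos (α - β) - 2 * d * (Real.sin α + Real.sin β)) := by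
  rw [← Real.sqrt_sq hp, rsl_straight_length_general h]
  simp
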